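/- arXiv:math/0107020 — 3 statements merged into one kernel-verified Lean document; each statement's English description precedes it below -/
import Mathlib

section
/- Let α, β be positive words with β ∈ Λ*, let E := S_α S_β* S_β S_α*, and let j ∈ {1,…,n}. Then E commutes with S_j S_j*, i.e. E S_j S_j* = S_j S_j* E. -/
open ContinuousLinearMap

/-- For a positive word `μ = μ₁…μ_k` over the alphabet `{1,…,n}`,
`Sw S μ = S_{μ₁} ⋯ S_{μ_k}`, with `Sw S [] = 1`. -/
noncomputable def Sw {H : Type*} [NormedAddCommGroup H] [InnerProductSpace ℂ H]
    {n : ℕ} (S : Fin n → H →L[ℂ] H) (μ : List (Fin n)) : H →L[ℂ] H :=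
  (μ.map S).prod

/-- `Lset Λ μ k` is the set `L_μ^k` of words `ν = ν₁…ν_k ∈ Λ` of length `k`
such that `μν₁…ν_{k-1} ∈ Λ` but `μν ∉ Λ`. -/
def Lset {n : ℕ} (Λ : Set (List (Fin n))) (μ : List (Fin n)) (k : ℕ) :
    Set (List (Fin n)) :=
  {ν | ν.length = k ∧ ν ∈ Λ ∧ μ ++ ν.dropLast ∈ Λ ∧ μ ++ ν ∉ Λ}

theorem aux_orth {H : Type*} [NormedAddCommGroup H] [InnerProductSpace ℂ H]
    [CompleteSpace H]
    (n : ℕ) (S : Fin n → H →L[ℂ] H)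
    (hpi : ∀ i, S i * adjoint (S i) * S i = S i)
    (hM1 : ∑ i, S i * adjoint (S i) = 1) (i j : Fin n) (hij : i ≠ j) :
    adjoint (S i) * S j = 0 := by
  ext x
  have key : ∀ k, ∀ y : H, RCLike.re (inner ℂ ((S k * adjoint (S k)) y) y)
      = ‖adjoint (S k) y‖ ^ 2 := by
    intro k y
    rw [ContinuousLinearMap.mul_apply, ← ContinuousLinearMap.adjoint_inner_right,
      inner_self_eq_norm_sq]
  have hsum : ∑ k, ‖adjoint (S k) (S j x)‖ ^ 2 = ‖S j x‖ ^ 2 := by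
    simp_rw [← key]
    rw [← map_sum, ← sum_inner, ← ContinuousLinearMap.sum_apply, hM1,
      ContinuousLinearMap.one_apply, inner_self_eq_norm_sq]
  have hj : ‖adjoint (S j) (S j x)‖ ^ 2 = ‖S j x‖ ^ 2 := by
    rw [← key, ← ContinuousLinearMap.mul_apply, hpi, inner_self_eq_norm_sq]
  have hle : ∑ k ∈ {i, j}, ‖adjoint (S k) (S j x)‖ ^ 2
      ≤ ∑ k, ‖adjoint (S k) (S j x)‖ ^ 2 :=
    Finset.sum_le_sum_of_subset_of_nonneg (Finset.subset_univ _) (fun _ _ _ => by positivity)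
  rw [Finset.sum_pair hij, hsum, hj] at hle
  have h0 : ‖adjoint (S i) (S j x)‖ ^ 2 = 0 := le_antisymm (by linarith) (by positivity)
  simpa using h0

theorem stmt_6 {H : Type*} [NormedAddCommGroup H] [InnerProductSpace ℂ H]
    [CompleteSpace H]
    (n : ℕ) (hn : 1 ≤ n) (S : Fin n → H →L[ℂ] H)
    (hpi : ∀ i, S i * adjoint (S i) * S i = S i)
    (Λ : Set (List (Fin n)))
    (hΛe : ([] : List (Fin n)) ∈ Λ)
    (hΛg : ∀ i : Fin n, [i] ∈ Λ)
    (hΛsub : ∀ ν ∈ Λ, ∀ w : List (Fin n), w <:+: ν → w ∈ Λ)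
    (hM1 : ∑ i, S i * adjoint (S i) = 1)
    (hM2 : ∀ μ ∈ Λ, ∀ ν ∈ Λ,
      Commute (Sw S μ * adjoint (Sw S μ)) (adjoint (Sw S ν) * Sw S ν))
    (hM3 : ∀ i : Fin n,
      HasSum (fun ν : ↥(⋃ k ≥ 1, Lset Λ [i] k) => Sw S ν.1 * adjoint (Sw S ν.1))
        (1 - adjoint (S i) * S i))
    (α β : List (Fin n)) (hβ : β ∈ Λ) (j : Fin n) :
    (Sw S α * adjoint (Sw S β) * Sw S β * adjoint (Sw S α)) * (S j * adjoint (S j)) =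
      (S j * adjoint (S j)) * (Sw S α * adjoint (Sw S β) * Sw S β * adjoint (Sw S α)) := by
  cases α with
  | nil =>
    have h := hM2 [j] (hΛg j) β hβ
    have h1 : Sw S ([] : List (Fin n)) = 1 := by simp [Sw]
    have h2 : Sw S [j] = S j := by simp [Sw]
    have h3 : adjoint (1 : H →L[ℂ] H) = 1 := by
      rw [← ContinuousLinearMap.star_eq_adjoint, star_one]
    rw [h2] at h
    rw [h1, h3, one_mul, mul_one]
    exact h.eq.symm
  | cons i a =>
    have h1 : Sw S (i :: a) = S i * Sw S a := by simp [Sw]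
    have h2 : adjoint (S i * Sw S a) = adjoint (Sw S a) * adjoint (S i) := by
      simp only [← ContinuousLinearMap.star_eq_adjoint, star_mul]
    rw [h1, h2]
    by_cases hij : i = j
    · subst hij
      have h3 : adjoint (S i) * (S i * adjoint (S i)) = adjoint (S i) := by
        have := congrArg star (hpi i)
        simpa only [star_mul, ← ContinuousLinearMap.star_eq_adjoint, star_star] using this
      have h4 : ∀ X, S i * (adjoint (S i) * (S i * X)) = S i * X := by
        intro X
        rw [← mul_assoc, ← mul_assoc, hpi]
      simp only [mul_assoc, h3, h4]
    · have h3 : ∀ X, adjoint (S i) * (S j * X) = 0 := by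
        intro X
        rw [← mul_assoc, aux_orth n S hpi hM1 i j hij, zero_mul]
      have h4 : ∀ X, adjoint (S j) * (S i * X) = 0 := by
        intro X
        rw [← mul_assoc, aux_orth n S hpi hM1 j i (Ne.symm hij), zero_mul]
      simp only [mul_assoc, h3, h4, mul_zero]
end

section
/- Let α, β be positive words with β ∈ Λ*, let E := S_α S_β* S_β S_α*, and let j ∈ {1,…,n}. Then E commutes with S_j* S_j, i.e. E S_j* S_j = S_j* S_j E. -/
open ContinuousLinearMap

theorem Sw_append' {H : Type*} [NormedAddCommGroup H] [InnerProductSpace ℂ H]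
    {n : ℕ} (S : Fin n → H →L[ℂ] H) (a b : List (Fin n)) :
    Sw S (a ++ b) = Sw S a * Sw S b := by
  simp [Sw]

theorem Sw_cons' {H : Type*} [NormedAddCommGroup H] [InnerProductSpace ℂ H]
    {n : ℕ} (S : Fin n → H →L[ℂ] H) (i : Fin n) (b : List (Fin n)) :
    Sw S (i :: b) = S i * Sw S b := by
  simp [Sw]

theorem prefix_cases {A : Type*} (a b : List A) :
    (∃ c, a = b ++ c) ∨ (∃ c, b = a ++ c) ∨
      ∃ g i k a' b', i ≠ k ∧ a = g ++ i :: a' ∧ b = g ++ k :: b' := by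
  induction a generalizing b with
  | nil => exact Or.inr (Or.inl ⟨b, rfl⟩)
  | cons x a ih =>
    cases b with
    | nil => exact Or.inl ⟨x :: a, rfl⟩
    | cons y b =>
      by_cases h : x = y
      · subst h
        rcases ih b with ⟨c, rfl⟩ | ⟨c, rfl⟩ | ⟨g, i, k, a', b', h, rfl, rfl⟩
        · exact Or.inl ⟨c, rfl⟩
        · exact Or.inr (Or.inl ⟨c, rfl⟩)
        · exact Or.inr (Or.inr ⟨x :: g, i, k, a', b', h, rfl, rfl⟩)
      · exact Or.inr (Or.inr ⟨[], x, y, a, b, h, rfl, rfl⟩)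

theorem orth_aux {H : Type*} [NormedAddCommGroup H] [InnerProductSpace ℂ H]
    [CompleteSpace H] {n : ℕ} (S : Fin n → H →L[ℂ] H)
    (hpi : ∀ i, S i * adjoint (S i) * S i = S i)
    (hM1 : ∑ i, S i * adjoint (S i) = 1) (i k : Fin n) (hik : i ≠ k) :
    star (S i) * S k = 0 := by
  ext y
  have key : ∀ x : H, ∑ l, ‖adjoint (S l) x‖ ^ 2 = ‖x‖ ^ 2 := by
    intro x
    have h1 : inner ℂ ((∑ l, S l * adjoint (S l)) x) x = inner ℂ x x := by rw [hM1]; rfl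
    rw [ContinuousLinearMap.sum_apply, sum_inner] at h1
    have h2 : ∀ l, inner ℂ ((S l * adjoint (S l)) x) x = ((‖adjoint (S l) x‖ ^ 2 : ℝ) : ℂ) := by
      intro l
      rw [ContinuousLinearMap.mul_apply, ← ContinuousLinearMap.adjoint_inner_right,
        inner_self_eq_norm_sq_to_K]
      norm_cast
    simp_rw [h2] at h1
    rw [inner_self_eq_norm_sq_to_K] at h1
    apply Complex.ofReal_injective
    rw [Complex.ofReal_sum, h1]
    simp
  have hk : ‖adjoint (S k) (S k y)‖ ^ 2 = ‖S k y‖ ^ 2 := by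
    have h0 : S k (adjoint (S k) (S k y)) = S k y := by
      have := congrArg (fun T : H →L[ℂ] H => T y) (hpi k)
      simpa using this
    have h1 : inner ℂ (adjoint (S k) (S k y)) (adjoint (S k) (S k y))
        = inner ℂ (S k y) (S k y) := by
      rw [ContinuousLinearMap.adjoint_inner_right, h0]
    rw [inner_self_eq_norm_sq_to_K, inner_self_eq_norm_sq_to_K] at h1
    exact_mod_cast h1
  have h3 := key (S k y)
  have h4 : ‖adjoint (S i) (S k y)‖ ^ 2 + ‖adjoint (S k) (S k y)‖ ^ 2
      ≤ ∑ l, ‖adjoint (S l) (S k y)‖ ^ 2 := by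
    rw [← Finset.sum_pair (f := fun l => ‖adjoint (S l) (S k y)‖ ^ 2) hik]
    exact Finset.sum_le_sum_of_subset_of_nonneg (Finset.subset_univ _)
      (fun _ _ _ => by positivity)
  have h5 : ‖adjoint (S i) (S k y)‖ ^ 2 = 0 := by
    have := sq_nonneg ‖adjoint (S i) (S k y)‖
    linarith
  have h6 : adjoint (S i) (S k y) = 0 := by simpa using h5
  simpa [ContinuousLinearMap.star_eq_adjoint] using h6

theorem stmt_7 {H : Type*} [NormedAddCommGroup H] [InnerProductSpace ℂ H]
    [CompleteSpace H]
    (n : ℕ) (hn : 1 ≤ n) (S : Fin n → H →L[ℂ] H)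
    (hpi : ∀ i, S i * adjoint (S i) * S i = S i)
    (Λ : Set (List (Fin n)))
    (hΛe : ([] : List (Fin n)) ∈ Λ)
    (hΛg : ∀ i : Fin n, [i] ∈ Λ)
    (hΛsub : ∀ ν ∈ Λ, ∀ w : List (Fin n), w <:+: ν → w ∈ Λ)
    (hM1 : ∑ i, S i * adjoint (S i) = 1)
    (hM2 : ∀ μ ∈ Λ, ∀ ν ∈ Λ,
      Commute (Sw S μ * adjoint (Sw S μ)) (adjoint (Sw S ν) * Sw S ν))
    (hM3 : ∀ i : Fin n,
      HasSum (fun ν : ↥(⋃ k ≥ 1, Lset Λ [i] k) => Sw S ν.1 * adjoint (Sw S ν.1))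
        (1 - adjoint (S i) * S i))
    (α β : List (Fin n)) (hβ : β ∈ Λ) (j : Fin n) :
    (Sw S α * adjoint (Sw S β) * Sw S β * adjoint (Sw S α)) * (adjoint (S j) * S j) =
      (adjoint (S j) * S j) * (Sw S α * adjoint (Sw S β) * Sw S β * adjoint (Sw S α)) := by
  have horth := orth_aux S hpi hM1
  simp only [← ContinuousLinearMap.star_eq_adjoint] at *
  have hpw : ∀ ν ∈ Λ, Sw S ν * (star (Sw S ν) * Sw S ν) = Sw S ν := by
    intro ν
    induction ν with
    | nil => intro _; simp [Sw]
    | cons i ν ih =>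
      intro h
      have hν : ν ∈ Λ := hΛsub _ h _ (List.suffix_cons i ν).isInfix
      have hc := (hM2 ν hν [i] (hΛg i)).eq
      have hs : Sw S [i] = S i := by simp [Sw]
      rw [hs] at hc
      rw [Sw_cons', star_mul]
      calc S i * Sw S ν * (star (Sw S ν) * star (S i) * (S i * Sw S ν))
          = S i * ((Sw S ν * star (Sw S ν)) * (star (S i) * S i)) * Sw S ν := by
            simp only [mul_assoc]
        _ = (S i * star (S i) * S i) * (Sw S ν * (star (Sw S ν) * Sw S ν)) := by
            rw [hc]; simp only [mul_assoc]
        _ = _ := by rw [hpi, ih hν]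
  have hpw' : ∀ ν ∈ Λ, star (Sw S ν) * Sw S ν * star (Sw S ν) = star (Sw S ν) := by
    intro ν h
    have := congrArg star (hpw ν h)
    simpa only [star_mul, star_star, mul_assoc] using this
  have main : ∀ ν ∈ Λ, Commute (Sw S α * star (Sw S β) * Sw S β * star (Sw S α))
      (Sw S ν * star (Sw S ν)) := by
    intro ν hν
    rcases prefix_cases α ν with ⟨c, rfl⟩ | ⟨c, rfl⟩ | ⟨g, i, k, a', b', hik, rfl, rfl⟩
    · have h1 := hpw ν hν
      have h2 := hpw' ν hν
      rw [Sw_append', star_mul]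
      generalize Sw S c = C at *
      generalize Sw S ν = V at *
      generalize Sw S β = B at *
      have e1 : V * C * star B * B * (star C * star V) * (V * star V)
          = V * C * star B * B * (star C * star V) := by
        calc _ = V * C * star B * B * star C * (star V * V * star V) := by
              simp only [mul_assoc]
          _ = _ := by rw [h2]; simp only [mul_assoc]
      have e2 : (V * star V) * (V * C * star B * B * (star C * star V))
          = V * C * star B * B * (star C * star V) := by
        calc _ = (V * (star V * V)) * (C * star B * B * (star C * star V)) := by
              simp only [mul_assoc]
          _ = _ := by rw [h1]; simp only [mul_assoc]
      exact e1.trans e2.symm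
    · have hα : α ∈ Λ := hΛsub _ hν _ (List.prefix_append α c).isInfix
      have hc : c ∈ Λ := hΛsub _ hν _ (List.suffix_append α c).isInfix
      have h1 := hpw α hα
      have h2 := hpw' α hα
      have c1 := (hM2 c hc α hα).eq
      have c2 := (hM2 c hc β hβ).eq
      rw [Sw_append', star_mul]
      generalize Sw S c = C at *
      generalize Sw S α = V at *
      generalize Sw S β = B at *
      have e1 : V * star B * B * star V * (V * C * (star C * star V))
          = V * ((C * star C) * (star B * B)) * star V := by
        calc _ = V * (star B * B) * ((star V * V) * (C * star C)) * star V := by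
              simp only [mul_assoc]
          _ = V * ((star B * B) * (C * star C)) * (star V * V * star V) := by
              rw [← c1]; simp only [mul_assoc]
          _ = _ := by rw [h2, c2]
      have e2 : (V * C * (star C * star V)) * (V * star B * B * star V)
          = V * ((C * star C) * (star B * B)) * star V := by
        calc _ = V * ((C * star C) * (star V * V)) * (star B * B) * star V := by
              simp only [mul_assoc]
          _ = (V * (star V * V)) * ((C * star C) * (star B * B)) * star V := by
              rw [c1]; simp only [mul_assoc]
          _ = _ := by rw [h1]
      exact e1.trans e2.symm
    · have hg : g ∈ Λ := hΛsub _ hν _ (List.prefix_append g _).isInfix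
      have hs : Sw S [i] = S i := by simp [Sw]
      have c1 := (hM2 [i] (hΛg i) g hg).eq
      rw [hs] at c1
      have hp : star (S i) * S i * star (S i) = star (S i) := by
        have := congrArg star (hpi i)
        simpa only [star_mul, star_star, mul_assoc] using this
      have ho := horth i k hik
      have hz : star (S i) * (star (Sw S g) * Sw S g) * S k = 0 := by
        generalize Sw S g = G at *
        calc _ = (star (S i) * S i * star (S i)) * (star G * G) * S k := by rw [hp]
          _ = star (S i) * ((S i * star (S i)) * (star G * G)) * S k := by
              simp only [mul_assoc]
          _ = star (S i) * (star G * G) * S i * (star (S i) * S k) := by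
              rw [c1]; simp only [mul_assoc]
          _ = 0 := by rw [ho, mul_zero]
      have hz1 : star (Sw S (g ++ i :: a')) * Sw S (g ++ k :: b') = 0 := by
        rw [Sw_append', Sw_append', Sw_cons', Sw_cons']
        simp only [star_mul]
        calc _ = star (Sw S a') * (star (S i) * (star (Sw S g) * Sw S g) * S k) * Sw S b' := by
              simp only [mul_assoc]
          _ = 0 := by rw [hz]; simp
      have hz2 : star (Sw S (g ++ k :: b')) * Sw S (g ++ i :: a') = 0 := by
        have := congrArg star hz1
        simpa only [star_mul, star_star, star_zero] using this
      generalize Sw S (g ++ i :: a') = A at *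
      generalize Sw S (g ++ k :: b') = V at *
      have e1 : A * star (Sw S β) * Sw S β * star A * (V * star V) = 0 := by
        calc _ = A * star (Sw S β) * Sw S β * (star A * V) * star V := by
              simp only [mul_assoc]
          _ = 0 := by rw [hz1]; simp
      have e2 : (V * star V) * (A * star (Sw S β) * Sw S β * star A) = 0 := by
        calc _ = V * (star V * A) * (star (Sw S β) * Sw S β * star A) := by
              simp only [mul_assoc]
          _ = 0 := by rw [hz2]; simp
      exact e1.trans e2.symm
  generalize Sw S α * star (Sw S β) * Sw S β * star (Sw S α) = E at *
  have hl := (hM3 j).mul_left E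
  have hr := (hM3 j).mul_right E
  have hfe : (fun ν : ↥(⋃ k ≥ 1, Lset Λ [j] k) => E * (Sw S ν.1 * star (Sw S ν.1)))
      = fun ν : ↥(⋃ k ≥ 1, Lset Λ [j] k) => (Sw S ν.1 * star (Sw S ν.1)) * E := by
    funext ν
    have hν : ν.1 ∈ Λ := by
      have := ν.2
      simp only [Set.mem_iUnion] at this
      obtain ⟨k, _, h⟩ := this
      exact h.2.1
    exact (main ν.1 hν).eq
  rw [hfe] at hl
  have := hl.unique hr
  rw [mul_sub, sub_mul, mul_one, one_mul] at this
  exact sub_right_injective this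
end

section
/- The map S : F_n → L(H) is a partial representation of the free group F_n on H: (P1) S(e) = I; (P2) S(t^{-1}) = S(t)* for all t ∈ F_n; and (P3) S(t)S(r)S(r^{-1}) = S(tr)S(r^{-1}) for all t, r ∈ F_n. -/
open ContinuousLinearMap

/-- For `t` in the free group `F_n` with reduced form `t = t₁⋯t_k`,
`Smap S t = S(t₁)⋯S(t_k)`, where `S(g_j) = S j` and `S(g_j⁻¹) = (S j)*`;
`Smap S 1 = 1`.  (In `FreeGroup (Fin n)`, the letter `(j, true)` is the
generator `g_j` and `(j, false)` is its inverse `g_j⁻¹`, and `.toWord`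
is the reduced word of an element.) -/
noncomputable def Smap {H : Type*} [NormedAddCommGroup H] [InnerProductSpace ℂ H]
    [CompleteSpace H] {n : ℕ} (S : Fin n → H →L[ℂ] H) (t : FreeGroup (Fin n)) :
    H →L[ℂ] H :=
  (t.toWord.map (fun p => if p.2 then S p.1 else adjoint (S p.1))).prod

set_option linter.unusedSectionVars false

section alg
variable {R : Type*} [Ring R] [StarRing R] {α : Type*} [DecidableEq α]

def sw9 (S : α → R) (μ : List α) : R := (μ.map S).prod

theorem sw9_cons (S : α → R) (i : α) (μ : List α) : sw9 S (i :: μ) = S i * sw9 S μ := by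
  simp [sw9]

theorem sw9_nil (S : α → R) : sw9 S [] = 1 := by
  simp [sw9]

theorem sw9_app (S : α → R) (μ ν : List α) : sw9 S (μ ++ ν) = sw9 S μ * sw9 S ν := by
  simp [sw9]

theorem pi9 (S : α → R) (hpi : ∀ i, S i * star (S i) * S i = S i)
    (hPQ : ∀ μ ν, Commute (sw9 S μ * star (sw9 S μ)) (star (sw9 S ν) * sw9 S ν)) (μ : List α) :
    sw9 S μ * star (sw9 S μ) * sw9 S μ = sw9 S μ := by
  induction μ with
  | nil => simp [sw9_nil]
  | cons i μ ih =>
    have h := (hPQ μ [i]).eq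
    simp only [sw9_cons, sw9_nil, mul_one, star_mul] at h ⊢
    calc S i * sw9 S μ * (star (sw9 S μ) * star (S i)) * (S i * sw9 S μ)
        = S i * (sw9 S μ * star (sw9 S μ) * (star (S i) * S i)) * sw9 S μ := by noncomm_ring
      _ = (S i * star (S i) * S i) * (sw9 S μ * star (sw9 S μ) * sw9 S μ) := by
          rw [h]; noncomm_ring
      _ = _ := by rw [hpi, ih]

theorem T9 (S : α → R) (hpi : ∀ i, S i * star (S i) * S i = S i)
    (h0 : ∀ i j, i ≠ j → star (S i) * S j = 0)
    (hPQ : ∀ μ ν, Commute (sw9 S μ * star (sw9 S μ)) (star (sw9 S ν) * sw9 S ν))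
    (hT : ∀ T : R, (∀ μ, Commute T (sw9 S μ * star (sw9 S μ))) →
      ∀ i, Commute T (star (S i) * S i)) (ν : List α) :
    ∀ T : R, (∀ μ, Commute T (sw9 S μ * star (sw9 S μ))) →
      Commute T (star (sw9 S ν) * sw9 S ν) := by
  induction ν using List.reverseRecOn with
  | nil => intro T _; simp [sw9_nil]
  | append_singleton ν j ih =>
    intro T hTP
    have hpi' : star (S j) * S j * star (S j) = star (S j) := by
      have := congrArg star (hpi j)
      simpa [mul_assoc] using this
    have hQ := (hT T hTP j).eq
    have key : ∀ μ, Commute (S j * T * star (S j)) (sw9 S μ * star (sw9 S μ)) := by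
      intro μ
      cases μ with
      | nil => simp [sw9_nil]
      | cons i μ =>
        have h1 := (hPQ μ [j]).eq
        have h2 := (hTP μ).eq
        simp only [sw9_cons, sw9_nil, mul_one, star_mul] at h1 ⊢
        by_cases hij : j = i
        · subst hij
          generalize hp : sw9 S μ * star (sw9 S μ) = p at *
          have e : S j * sw9 S μ * (star (sw9 S μ) * star (S j)) = S j * p * star (S j) := by
            rw [← hp]; noncomm_ring
          rw [e]
          show _ = _
          calc S j * T * star (S j) * (S j * p * star (S j))
              = S j * T * ((star (S j) * S j) * p) * star (S j) := by noncomm_ring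
            _ = S j * (T * p) * (star (S j) * S j * star (S j)) := by
                rw [← h1]; noncomm_ring
            _ = S j * (p * T) * (star (S j) * S j * star (S j)) := by rw [h2]
            _ = S j * p * (T * (star (S j) * S j)) * star (S j) := by noncomm_ring
            _ = S j * p * star (S j) * (S j * T * star (S j)) := by rw [hQ]; noncomm_ring
        · show _ = _
          calc _ = S j * T * (star (S j) * S i) * (sw9 S μ * (star (sw9 S μ) * star (S i))) := by
                noncomm_ring
            _ = S i * sw9 S μ * (star (sw9 S μ)) * (star (S i) * S j) * T * star (S j) := by
                rw [h0 _ _ hij, h0 _ _ (Ne.symm hij)]; simp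
            _ = _ := by noncomm_ring
    have h3 := (ih _ key).eq
    simp only [sw9_app, sw9_cons, sw9_nil, mul_one, star_mul]
    generalize hq : star (sw9 S ν) * sw9 S ν = q at *
    have e : star (S j) * star (sw9 S ν) * (sw9 S ν * S j) = star (S j) * q * S j := by
      rw [← hq]; noncomm_ring
    rw [e]
    show _ = _
    calc T * (star (S j) * q * S j)
        = T * ((star (S j) * S j * star (S j)) * q * S j) := by rw [hpi']
      _ = (T * (star (S j) * S j)) * star (S j) * q * S j := by noncomm_ring
      _ = star (S j) * (S j * T * star (S j) * q) * S j := by rw [hQ]; noncomm_ring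
      _ = star (S j) * q * S j * (T * (star (S j) * S j)) := by rw [h3]; noncomm_ring
      _ = star (S j) * q * (S j * star (S j) * S j) * T := by rw [hQ]; noncomm_ring
      _ = _ := by rw [hpi]

theorem QE9 (S : α → R) (hpi : ∀ i, S i * star (S i) * S i = S i)
    (hPQ : ∀ μ ν, Commute (sw9 S μ * star (sw9 S μ)) (star (sw9 S ν) * sw9 S ν))
    (hQQ : ∀ μ ν, Commute (star (sw9 S μ) * sw9 S μ) (star (sw9 S ν) * sw9 S ν))
    (β a : List α) : ∀ ν, Commute (star (sw9 S ν) * sw9 S ν)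
      (sw9 S a * (star (sw9 S β) * sw9 S β) * star (sw9 S a)) := by
  induction a with
  | nil => intro ν; simpa [sw9_nil] using hQQ ν β
  | cons j a ih =>
    intro ν
    have hpi' : star (S j) * S j * star (S j) = star (S j) := by
      have := congrArg star (hpi j)
      simpa [mul_assoc] using this
    have h1 := (hPQ [j] ν).eq
    have h2 := (ih (ν ++ [j])).eq
    simp only [sw9_app, sw9_cons, sw9_nil, mul_one, star_mul] at h1 h2 ⊢
    generalize hy : sw9 S a * (star (sw9 S β) * sw9 S β) * star (sw9 S a) = y at *
    have e : S j * sw9 S a * (star (sw9 S β) * sw9 S β) * (star (sw9 S a) * star (S j))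
        = S j * y * star (S j) := by rw [← hy]; noncomm_ring
    rw [e]
    generalize hq : star (sw9 S ν) * sw9 S ν = q at *
    have e : star (S j) * star (sw9 S ν) * (sw9 S ν * S j) = star (S j) * q * S j := by
      rw [← hq]; noncomm_ring
    rw [e] at h2
    show _ = _
    calc q * (S j * y * star (S j)) = q * ((S j * star (S j) * S j) * y * star (S j)) := by
          rw [hpi]
      _ = (q * (S j * star (S j))) * S j * y * star (S j) := by noncomm_ring
      _ = S j * (star (S j) * q * S j * y) * star (S j) := by rw [← h1]; noncomm_ring
      _ = S j * y * star (S j) * (q * (S j * star (S j))) := by rw [h2]; noncomm_ring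
      _ = S j * y * (star (S j) * S j * star (S j)) * q := by rw [← h1]; noncomm_ring
      _ = _ := by rw [hpi']

theorem EE9 (S : α → R) (hpi : ∀ i, S i * star (S i) * S i = S i)
    (h0 : ∀ i j, i ≠ j → star (S i) * S j = 0)
    (hPQ : ∀ μ ν, Commute (sw9 S μ * star (sw9 S μ)) (star (sw9 S ν) * sw9 S ν))
    (hQQ : ∀ μ ν, Commute (star (sw9 S μ) * sw9 S μ) (star (sw9 S ν) * sw9 S ν))
    (β ν μ : List α) : ∀ a, Commute (sw9 S μ * (star (sw9 S ν) * sw9 S ν) * star (sw9 S μ))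
      (sw9 S a * (star (sw9 S β) * sw9 S β) * star (sw9 S a)) := by
  induction μ with
  | nil => intro a; simpa [sw9_nil] using QE9 S hpi hPQ hQQ β a ν
  | cons i μ ih =>
    intro a
    cases a with
    | nil => simpa [sw9_nil] using (QE9 S hpi hPQ hQQ ν (i :: μ) β).symm
    | cons j a =>
      have h1 := (ih a).eq
      have h2 := (QE9 S hpi hPQ hQQ ν μ [i]).eq
      have h3 := (QE9 S hpi hPQ hQQ β a [i]).eq
      simp only [sw9_cons, sw9_nil, mul_one, star_mul] at h2 h3 ⊢
      generalize hy : sw9 S a * (star (sw9 S β) * sw9 S β) * star (sw9 S a) = y at *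
      have e : S j * sw9 S a * (star (sw9 S β) * sw9 S β) * (star (sw9 S a) * star (S j))
          = S j * y * star (S j) := by rw [← hy]; noncomm_ring
      rw [e]
      generalize hz : sw9 S μ * (star (sw9 S ν) * sw9 S ν) * star (sw9 S μ) = z at *
      have e : S i * sw9 S μ * (star (sw9 S ν) * sw9 S ν) * (star (sw9 S μ) * star (S i))
          = S i * z * star (S i) := by rw [← hz]; noncomm_ring
      rw [e]
      show _ = _
      by_cases hij : i = j
      · subst hij
        calc S i * z * star (S i) * (S i * y * star (S i))
            = S i * z * (star (S i) * S i * y) * star (S i) := by noncomm_ring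
          _ = S i * (z * y) * (star (S i) * S i) * star (S i) := by rw [h3]; noncomm_ring
          _ = S i * y * (z * (star (S i) * S i)) * star (S i) := by rw [h1]; noncomm_ring
          _ = _ := by rw [← h2]; noncomm_ring
      · calc _ = S i * z * (star (S i) * S j) * y * star (S j) := by noncomm_ring
          _ = S j * y * (star (S j) * S i) * z * star (S i) := by
            rw [h0 _ _ hij, h0 _ _ (Ne.symm hij)]; simp
          _ = _ := by noncomm_ring

def ww9 (S : α → R) (L : List (α × Bool)) : R :=
  (L.map (fun p => if p.2 then S p.1 else star (S p.1))).prod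

theorem ww9_cons (S : α → R) (p) (L : List (α × Bool)) :
    ww9 S (p :: L) = (if p.2 then S p.1 else star (S p.1)) * ww9 S L := by
  simp [ww9]

theorem ww9_app (S : α → R) (L M : List (α × Bool)) :
    ww9 S (L ++ M) = ww9 S L * ww9 S M := by
  simp [ww9]

theorem ww9_inv (S : α → R) (L : List (α × Bool)) :
    ww9 S (FreeGroup.invRev L) = star (ww9 S L) := by
  induction L with
  | nil => simp [ww9]
  | cons p L ih =>
    have : FreeGroup.invRev (p :: L) = FreeGroup.invRev L ++ [(p.1, !p.2)] := by
      simp [FreeGroup.invRev]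
    rw [this, ww9_app, ih, ww9_cons S p, star_mul]
    rcases p with ⟨a, _ | _⟩ <;> simp [ww9]

theorem form9 (S : α → R) (h0 : ∀ i j, i ≠ j → star (S i) * S j = 0)
    (L : List (α × Bool)) (hL : FreeGroup.IsReduced L) :
    ww9 S L = 0 ∨ ∃ μ ν, ww9 S L = sw9 S μ * star (sw9 S ν) ∧
      (∀ i μ', μ = i :: μ' → ∃ L', L = (i, true) :: L') := by
  induction L with
  | nil => right; exact ⟨[], [], by simp [ww9, sw9], by simp⟩
  | cons p L ih =>
    rw [ww9_cons]
    have hL' : FreeGroup.IsReduced L := List.IsChain.tail hL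
    rcases ih hL' with h | ⟨μ, ν, h, hh⟩
    · left; simp [h]
    · rcases p with ⟨a, _ | _⟩
      · cases μ with
        | nil =>
          right
          refine ⟨[], ν ++ [a], ?_, by simp⟩
          simp [h, sw9]
        | cons j μ =>
          left
          obtain ⟨L', rfl⟩ := hh j μ rfl
          have hne : a ≠ j := by
            rintro rfl
            simp [FreeGroup.IsReduced] at hL
          rw [h, sw9_cons]
          have := h0 _ _ hne
          simp only [Bool.false_eq_true, if_false]
          calc _ = (star (S a) * S j) * sw9 S μ * star (sw9 S ν) := by noncomm_ring
            _ = 0 := by rw [this]; simp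
      · right
        refine ⟨a :: μ, ν, ?_, ?_⟩
        · simp [h, sw9_cons, mul_assoc]
        · rintro i μ' he
          cases he
          exact ⟨L, rfl⟩

theorem dec9 (L1 : List (α × Bool)) : ∀ L2, FreeGroup.IsReduced L1 → FreeGroup.IsReduced L2 →
    ∃ A X B, L1 = A ++ X ∧ L2 = FreeGroup.invRev X ++ B ∧ FreeGroup.IsReduced (A ++ B) := by
  induction L1 using List.reverseRecOn with
  | nil => intro L2 _ h; exact ⟨[], [], L2, by simp, by simp, by simpa using h⟩
  | append_singleton L a ih =>
    intro L2 h1 h2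
    cases L2 with
    | nil => exact ⟨L ++ [a], [], [], by simp, by simp, by simpa using h1⟩
    | cons b L2 =>
      by_cases hb : b = (a.1, !a.2)
      · obtain ⟨A, X, B, e1, e2, h⟩ := ih L2 (List.IsChain.left_of_append h1) (List.IsChain.tail h2)
        refine ⟨A, X ++ [a], B, by simp [e1], ?_, h⟩
        rw [e2, hb]
        simp [FreeGroup.invRev]
      · refine ⟨L ++ [a], [], b :: L2, by simp, by simp, ?_⟩
        refine List.IsChain.append h1 h2 ?_
        intro x hx y hy
        simp at hx hy
        subst hx hy
        intro h
        by_contra hne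
        apply hb
        ext
        · exact h.symm
        · revert hne; cases a.2 <;> cases b.2 <;> simp

theorem main9 (S : α → R) (hpi : ∀ i, S i * star (S i) * S i = S i)
    (h0 : ∀ i j, i ≠ j → star (S i) * S j = 0)
    (hPQ : ∀ μ ν, Commute (sw9 S μ * star (sw9 S μ)) (star (sw9 S ν) * sw9 S ν))
    (hT : ∀ T : R, (∀ μ, Commute T (sw9 S μ * star (sw9 S μ))) →
      ∀ i, Commute T (star (S i) * S i)) (t r : FreeGroup α) :
    ww9 S t.toWord * ww9 S r.toWord * star (ww9 S r.toWord) =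
      ww9 S (t * r).toWord * star (ww9 S r.toWord) := by
  have hQQ : ∀ μ ν, Commute (star (sw9 S μ) * sw9 S μ) (star (sw9 S ν) * sw9 S ν) :=
    fun μ ν => T9 S hpi h0 hPQ hT ν _ (fun a => (hPQ a μ).symm)
  have hp := pi9 S hpi hPQ
  have hp' : ∀ μ, star (sw9 S μ) * sw9 S μ * star (sw9 S μ) = star (sw9 S μ) := by
    intro μ
    have := congrArg star (hp μ)
    simpa [mul_assoc] using this
  have hrt : FreeGroup.IsReduced t.toWord := FreeGroup.isReduced_toWord
  have hrr : FreeGroup.IsReduced r.toWord := FreeGroup.isReduced_toWord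
  obtain ⟨A, X, B, e1, e2, h⟩ := dec9 t.toWord r.toWord hrt hrr
  have e3 : (t * r).toWord = A ++ B := by
    have : t * r = FreeGroup.mk (A ++ B) := by
      rw [← FreeGroup.mk_toWord (x := t), ← FreeGroup.mk_toWord (x := r), e1, e2,
        ← FreeGroup.mul_mk, ← FreeGroup.mul_mk, ← FreeGroup.mul_mk, ← FreeGroup.inv_mk]
      group
    rw [this, FreeGroup.toWord_mk]
    exact h.reduce_eq
  rw [e1] at hrt
  rw [e2] at hrr
  have hX : FreeGroup.IsReduced X := List.IsChain.right_of_append hrt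
  have hB : FreeGroup.IsReduced B := List.IsChain.right_of_append hrr
  rw [e3, e1, e2]
  simp only [ww9_app, ww9_inv, star_mul, star_star]
  suffices hs : ww9 S X * star (ww9 S X) * (ww9 S B * star (ww9 S B)) * ww9 S X
      = ww9 S B * star (ww9 S B) * ww9 S X by
    calc _ = ww9 S A * (ww9 S X * star (ww9 S X) * (ww9 S B * star (ww9 S B)) * ww9 S X) := by
          noncomm_ring
      _ = _ := by rw [hs]; noncomm_ring
  rcases form9 S h0 X hX with hx | ⟨μ, ν, hx, -⟩
  · simp [hx]
  rcases form9 S h0 B hB with hb | ⟨μ', ν', hb, -⟩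
  · simp [hb]
  have hc := (EE9 S hpi h0 hPQ hQQ ν' ν μ μ').eq
  have hxx : ww9 S X * star (ww9 S X) * ww9 S X = ww9 S X := by
    rw [hx]
    simp only [star_mul, star_star]
    calc _ = sw9 S μ * ((star (sw9 S ν) * sw9 S ν) * (star (sw9 S μ) * sw9 S μ))
            * star (sw9 S ν) := by noncomm_ring
      _ = (sw9 S μ * star (sw9 S μ) * sw9 S μ) * (star (sw9 S ν) * sw9 S ν * star (sw9 S ν)) := by
          rw [(hQQ ν μ).eq]; noncomm_ring
      _ = _ := by rw [hp, hp']
  have hcc : ww9 S X * star (ww9 S X) * (ww9 S B * star (ww9 S B)) =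
      (ww9 S B * star (ww9 S B)) * (ww9 S X * star (ww9 S X)) := by
    rw [hx, hb]
    simp only [star_mul, star_star]
    simp only [mul_assoc] at hc ⊢
    exact hc
  rw [hcc, mul_assoc, hxx]

end alg

theorem mulapp9 {H : Type*} [NormedAddCommGroup H] [InnerProductSpace ℂ H]
    (A B : H →L[ℂ] H) (x : H) : (A * B) x = A (B x) := rfl

theorem star9 {R : Type*} [Ring R] [StarRing R] (W : R) (h : W * star W * W = W) :
    star W * W * star W = star W := by
  have := congrArg star h
  simpa [mul_assoc] using this

theorem orth9 {H : Type*} [NormedAddCommGroup H] [InnerProductSpace ℂ H]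
    [CompleteSpace H] {n : ℕ} (S : Fin n → H →L[ℂ] H)
    (hpi : ∀ i, S i * adjoint (S i) * S i = S i)
    (hM1 : ∑ i, S i * adjoint (S i) = 1) (i j : Fin n) (hij : i ≠ j) :
    adjoint (S i) * S j = 0 := by
  ext y
  have hn : ∀ x, ∑ k, ‖adjoint (S k) x‖ ^ 2 = ‖x‖ ^ 2 := by
    intro x
    have h := congrArg (fun T : H →L[ℂ] H => RCLike.re (inner ℂ (T x) x)) hM1
    simp only [sum_apply, sum_inner, map_sum, mulapp9, one_apply_eq_self,
      inner_self_eq_norm_sq] at h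
    rw [← h]
    refine Finset.sum_congr rfl fun k _ => ?_
    rw [← adjoint_inner_right (S k), inner_self_eq_norm_sq]
  have hx := hn (S j y)
  have hj : ‖adjoint (S j) (S j y)‖ ^ 2 = ‖S j y‖ ^ 2 := by
    rw [← inner_self_eq_norm_sq (𝕜 := ℂ), ← inner_self_eq_norm_sq (𝕜 := ℂ),
      adjoint_inner_right]
    have := congrArg (fun T : H →L[ℂ] H => T y) (hpi j)
    simp only [mulapp9] at this
    rw [this]
  rw [← Finset.add_sum_erase _ _ (Finset.mem_univ j), hj] at hx
  have hz : ∑ k ∈ Finset.univ.erase j, ‖adjoint (S k) (S j y)‖ ^ 2 = 0 := by linarith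
  rw [Finset.sum_eq_zero_iff_of_nonneg (fun _ _ => by positivity)] at hz
  have := hz i (by simp [hij])
  simpa using this

theorem zero9 {H : Type*} [NormedAddCommGroup H] [InnerProductSpace ℂ H]
    [CompleteSpace H] {ι : Type*} (W : H →L[ℂ] H) (V : ι → H →L[ℂ] H)
    (hpi : W * adjoint W * W = W)
    (hM3 : HasSum (fun k => V k * adjoint (V k)) (1 - adjoint W * W)) (k : ι) :
    W * V k = 0 := by
  have hs : adjoint (V k) * adjoint W = 0 := by
    ext y
    have h1 := (hM3.mapL (ContinuousLinearMap.apply ℂ H (adjoint W y)))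
    have h2 := h1.mapL (innerSL ℂ (adjoint W y))
    have h3 := h2.mapL (RCLike.reCLM (K := ℂ))
    have hpi' : adjoint W * W * adjoint W = adjoint W := star9 W hpi
    have hv := congrArg (fun T : H →L[ℂ] H => T y) hpi'
    simp only [mulapp9] at hv
    have hk : ∀ k, RCLike.re (inner ℂ (adjoint W y) (V k (adjoint (V k) (adjoint W y)))) =
        ‖adjoint (V k) (adjoint W y)‖ ^ 2 := by
      intro k
      rw [← adjoint_inner_left (V k), inner_self_eq_norm_sq]
    have h4 : HasSum (fun k => ‖adjoint (V k) (adjoint W y)‖ ^ 2) 0 := by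
      simp only [← hk]
      simpa only [apply_apply, sub_apply, one_apply_eq_self, mulapp9, hv, sub_self, map_zero,
        innerSL_apply_apply, RCLike.reCLM_apply] using h3
    rw [hasSum_zero_iff_of_nonneg (fun k => by positivity)] at h4
    have := congrFun h4 k
    simpa [mulapp9] using this
  have := congrArg star hs
  simpa [star_eq_adjoint, ← star_eq_adjoint, star_mul] using this

theorem stmt_9 {H : Type*} [NormedAddCommGroup H] [InnerProductSpace ℂ H]
    [CompleteSpace H]
    (n : ℕ) (hn : 1 ≤ n) (S : Fin n → H →L[ℂ] H)
    (hpi : ∀ i, S i * adjoint (S i) * S i = S i)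
    (Λ : Set (List (Fin n)))
    (hΛe : ([] : List (Fin n)) ∈ Λ)
    (hΛg : ∀ i : Fin n, [i] ∈ Λ)
    (hΛsub : ∀ ν ∈ Λ, ∀ w : List (Fin n), w <:+: ν → w ∈ Λ)
    (hM1 : ∑ i, S i * adjoint (S i) = 1)
    (hM2 : ∀ μ ∈ Λ, ∀ ν ∈ Λ,
      Commute (Sw S μ * adjoint (Sw S μ)) (adjoint (Sw S ν) * Sw S ν))
    (hM3 : ∀ i : Fin n,
      HasSum (fun ν : ↥(⋃ k ≥ 1, Lset Λ [i] k) => Sw S ν.1 * adjoint (Sw S ν.1))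
        (1 - adjoint (S i) * S i)) :
    Smap S (1 : FreeGroup (Fin n)) = 1 ∧
    (∀ t : FreeGroup (Fin n), Smap S t⁻¹ = adjoint (Smap S t)) ∧
    (∀ t r : FreeGroup (Fin n),
      Smap S t * Smap S r * Smap S r⁻¹ = Smap S (t * r) * Smap S r⁻¹) := by
  have h0 := orth9 S hpi hM1
  have hSw : ∀ μ, Sw S μ = sw9 S μ := fun μ => rfl
  have hz : ∀ m : ℕ, ∀ μ : List (Fin n), μ.length = m → μ ∉ Λ → Sw S μ = 0 := by
    intro m
    induction m with
    | zero =>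
      intro μ h1 h2
      rw [List.length_eq_zero_iff] at h1
      exact absurd (h1 ▸ hΛe) h2
    | succ m ih =>
      intro μ h1 h2
      cases μ with
      | nil => exact absurd hΛe h2
      | cons i ν =>
        have hl : ν.length = m := by simpa using h1
        by_cases hν : ν ∈ Λ
        · rcases List.eq_nil_or_concat ν with rfl | ⟨κ, b, rfl⟩
          · exact absurd (hΛg i) h2
          · by_cases hd : i :: κ ∈ Λ
            · have := zero9 (S i) _ (hpi i) (hM3 i) ⟨κ ++ [b], by
                simp only [Set.mem_iUnion]
                refine ⟨(κ ++ [b]).length, by simp, rfl, by simpa using hν, by simpa using hd,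
                  by simpa using h2⟩⟩
              simpa [Sw] using this
            · have := ih (i :: κ) (by simpa using hl) hd
              have e : Sw S (i :: (κ ++ [b])) = Sw S (i :: κ) * S b := by
                simp [Sw, mul_assoc]
              simpa [this] using e
        · have := ih ν hl hν
          have e : Sw S (i :: ν) = S i * Sw S ν := by simp [Sw]
          rw [e, this, mul_zero]
  have hPQ : ∀ μ ν, Commute (sw9 S μ * star (sw9 S μ)) (star (sw9 S ν) * sw9 S ν) := by
    intro μ ν
    by_cases hμ : μ ∈ Λ
    · by_cases hν : ν ∈ Λ
      · exact hM2 μ hμ ν hν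
      · rw [← hSw ν, hz _ ν rfl hν]; simp
    · rw [← hSw μ, hz _ μ rfl hμ]; simp
  have hT : ∀ T : H →L[ℂ] H, (∀ μ, Commute T (sw9 S μ * star (sw9 S μ))) →
      ∀ i, Commute T (star (S i) * S i) := by
    intro T hT i
    have a1 := (hM3 i).mul_left T
    have a2 := (hM3 i).mul_right T
    have e : (fun ν : ↥(⋃ k ≥ 1, Lset Λ [i] k) => T * (Sw S ν.1 * adjoint (Sw S ν.1)))
        = fun ν : ↥(⋃ k ≥ 1, Lset Λ [i] k) => (Sw S ν.1 * adjoint (Sw S ν.1)) * T := by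
      funext ν
      exact (hT ν.1).eq
    rw [e] at a1
    have := a1.unique a2
    rw [mul_sub, sub_mul, mul_one, one_mul] at this
    exact sub_right_injective this
  have hinv : ∀ t : FreeGroup (Fin n), Smap S t⁻¹ = adjoint (Smap S t) := by
    intro t
    have := ww9_inv S t.toWord
    rw [← FreeGroup.toWord_inv] at this
    exact this
  refine ⟨by simp [Smap], hinv, ?_⟩
  intro t r
  rw [hinv]
  exact main9 S hpi h0 hPQ hT t r
end
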